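/- Let n ≥ 3, let q_n = ((−1)^{n+1} + 2ⁿ)/3, and define the utility vector m on [n+1] by m_i = 2^i for 1 ≤ i ≤ n−2, m_{n−1} = q_n, m_n = 2^{n−1}, m_{n+1} = 2ⁿ, with induced comparative probability order ≼_m on subsets of [n+1]. Let g_n be the number of ordered pairs (A,B) of disjoint subsets of [n] with ∑_{i∈B} 2^i − ∑_{i∈A} 2^i = q_n + 1, and let h_n be the number of ordered pairs (A,B) of disjoint subsets of [n] with ∑_{i∈B} 2^i − ∑_{i∈A} 2^i = q_n − 1. Then the number of flippable pairs of ≼_m equals g_n + h_n. -/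

import Mathlib

/-!
Give the elements of `[n]` the utilities `2, 4, …, 2 ^ n` and insert one more element of odd
utility `q < 2 ^ n`. Then every number in `[q - 1, 2 ^ (n + 1))` is the utility of some set, so two
disjoint sets whose utilities differ by at least two are separated by a third set, either directly
or after the odd element has been adjoined to both. Hence the flippable pairs are the disjoint
pairs of utility difference one. By parity the odd element lies in exactly one set of such a pair,
and deleting it leaves a disjoint pair of subsets of `[n]` of utility difference `q + 1` or `q - 1`.
-/

open Finset

/-- The strict part of a (total antisymmetric) order on subsets. -/
def cpLT {n : ℕ} (le : Finset (Fin n) → Finset (Fin n) → Prop)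
    (A B : Finset (Fin n)) : Prop :=
  le A B ∧ A ≠ B

/-- `le` is a comparative probability order on `[n]`: a linear (total,
antisymmetric, transitive) order on the powerset of `[n]` with `∅ ≺ A` for
nonempty `A`, satisfying de Finetti's axiom. -/
def IsCPO {n : ℕ} (le : Finset (Fin n) → Finset (Fin n) → Prop) : Prop :=
  (∀ A B, le A B ∨ le B A) ∧
  (∀ A B, le A B → le B A → A = B) ∧
  (∀ A B C, le A B → le B C → le A C) ∧
  (∀ A : Finset (Fin n), A ≠ ∅ → cpLT le ∅ A) ∧
  (∀ A B C : Finset (Fin n), Disjoint (A ∪ B) C → (le A B ↔ le (A ∪ C) (B ∪ C)))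

/-- `(A,B)` is a critical pair: disjoint, `A ≺ B`, and no `C` with `A ≺ C ≺ B`. -/
def Critical {n : ℕ} (le : Finset (Fin n) → Finset (Fin n) → Prop)
    (A B : Finset (Fin n)) : Prop :=
  Disjoint A B ∧ cpLT le A B ∧ ¬ ∃ C, cpLT le A C ∧ cpLT le C B

/-- `(A,B)` is a flippable pair: critical, and for every `D` disjoint from
`A ∪ B` the pair `(A ∪ D, B ∪ D)` is adjacent. -/
def Flippable {n : ℕ} (le : Finset (Fin n) → Finset (Fin n) → Prop)
    (A B : Finset (Fin n)) : Prop :=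
  Critical le A B ∧
  ∀ D : Finset (Fin n), Disjoint D (A ∪ B) →
    ¬ ∃ C, cpLT le (A ∪ D) C ∧ cpLT le C (B ∪ D)

/-- The set of flippable pairs of an order. -/
def FlippablePairs {n : ℕ} (le : Finset (Fin n) → Finset (Fin n) → Prop) :
    Set (Finset (Fin n) × Finset (Fin n)) :=
  {p | Flippable le p.1 p.2}

/-- `le` is (additively) representable by a positive utility vector. -/
def Representable {n : ℕ} (le : Finset (Fin n) → Finset (Fin n) → Prop) : Prop :=
  ∃ u : Fin n → ℝ, (∀ i, 0 < u i) ∧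
    ∀ A B : Finset (Fin n), le A B ↔ ∑ i ∈ A, u i ≤ ∑ i ∈ B, u i

/-- `(X, Y) = (A ∪ D, B ∪ D)` for some `D` disjoint from `A ∪ B`. -/
def FlipRel {n : ℕ} (A B X Y : Finset (Fin n)) : Prop :=
  ∃ D : Finset (Fin n), Disjoint D (A ∪ B) ∧ X = A ∪ D ∧ Y = B ∪ D

/-- The relation obtained from `le` by flipping over the pair `(A,B)`:
all comparisons between `A ∪ D` and `B ∪ D` (for `D` disjoint from `A ∪ B`)
are reversed, all other comparisons are kept. -/
def flipOrder {n : ℕ} (le : Finset (Fin n) → Finset (Fin n) → Prop)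
    (A B : Finset (Fin n)) : Finset (Fin n) → Finset (Fin n) → Prop :=
  fun X Y => (le X Y ∧ ¬ FlipRel A B X Y) ∨ FlipRel A B Y X

/-- Utility (sum of weights) of a subset. -/
def usum {k : ℕ} (m : Fin k → ℕ) (A : Finset (Fin k)) : ℕ := ∑ i ∈ A, m i

/-- The order on subsets induced by a utility vector. -/
def uord {k : ℕ} (m : Fin k → ℕ) : Finset (Fin k) → Finset (Fin k) → Prop :=
  fun A B => usum m A ≤ usum m B

/-- `qn n = ((−1)^(n+1) + 2^n) / 3` as a natural number. -/
def qn (n : ℕ) : ℕ := if n % 2 = 1 then (2 ^ n + 1) / 3 else (2 ^ n - 1) / 3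

/-- The utility vector `m` on `[n+1]` (element `k` corresponds to index `k-1`):
`m_k = 2^k` for `1 ≤ k ≤ n−2`, `m_{n−1} = qn n`, `m_n = 2^(n−1)`, `m_{n+1} = 2^n`. -/
def mvec (n : ℕ) : Fin (n + 1) → ℕ := fun i =>
  if (i : ℕ) + 1 ≤ n - 2 then 2 ^ ((i : ℕ) + 1)
  else if (i : ℕ) + 1 = n - 1 then qn n
  else if (i : ℕ) + 1 = n then 2 ^ (n - 1)
  else 2 ^ n

/-- Ordered pairs `(A,B)` of disjoint subsets of `[n]` (element `k` has utility
`2^k`, i.e. index `i` has utility `2^(i+1)`) with utility difference `d`. -/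
def diffPairs (n : ℕ) (d : ℕ) : Set (Finset (Fin n) × Finset (Fin n)) :=
  {p | Disjoint p.1 p.2 ∧
    ∑ i ∈ p.2, 2 ^ ((i : ℕ) + 1) = (∑ i ∈ p.1, 2 ^ ((i : ℕ) + 1)) + d}

/-- `g n`: the number of disjoint pairs with utility difference `qn n + 1`. -/
noncomputable def gfun (n : ℕ) : ℕ := (diffPairs n (qn n + 1)).ncard

/-- `h n`: the number of disjoint pairs with utility difference `qn n − 1`. -/
noncomputable def hfun (n : ℕ) : ℕ := (diffPairs n (qn n - 1)).ncard

/-- The disjoint pairs `(A, B)` in which `B` outweighs `A` by exactly `d` under the utility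
vector `w`; `diffPairs n d` is `gapPairs (binaryUtility n) d`. -/
def gapPairs {k : ℕ} (w : Fin k → ℕ) (d : ℕ) : Set (Finset (Fin k) × Finset (Fin k)) :=
  {P | Disjoint P.1 P.2 ∧ usum w P.2 = usum w P.1 + d}

/-- The utility vector `(2, 4, …, 2 ^ n)` on `[n]`. -/
def binaryUtility (n : ℕ) : Fin n → ℕ := fun i => 2 ^ ((i : ℕ) + 1)

/-- The utility vector `(2, 4, …, 2 ^ n)` with an extra element of utility `q` inserted at
position `p`; `mvec n` is the instance `q = qn n`, `p = n - 2` (positions start at `0`). -/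
def binaryInsertNth {n : ℕ} (p : Fin (n + 1)) (q : ℕ) : Fin (n + 1) → ℕ :=
  p.insertNth q (binaryUtility n)

section Order

variable {k : ℕ} {u : Fin k → ℕ} {A B : Finset (Fin k)}

theorem usum_union (h : Disjoint A B) : usum u (A ∪ B) = usum u A + usum u B :=
  Finset.sum_union h

theorem cpLT_uord_iff (hu : Function.Injective (usum u)) :
    cpLT (uord u) A B ↔ usum u A < usum u B := by
  rw [cpLT, uord, lt_iff_le_and_ne, hu.ne_iff]

theorem flippable_uord_iff (hu : Function.Injective (usum u)) :
    Flippable (uord u) A B ↔ Disjoint A B ∧ usum u A < usum u B ∧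
      ∀ D, Disjoint D (A ∪ B) →
        ∀ C, usum u A + usum u D < usum u C → usum u B + usum u D ≤ usum u C := by
  have hadjacent : ∀ D, Disjoint D (A ∪ B) →
      ((¬ ∃ C, cpLT (uord u) (A ∪ D) C ∧ cpLT (uord u) C (B ∪ D)) ↔
        ∀ C, usum u A + usum u D < usum u C → usum u B + usum u D ≤ usum u C) := by
    intro D hD
    obtain ⟨hDA, hDB⟩ := Finset.disjoint_union_right.1 hD
    simp only [cpLT_uord_iff hu, usum_union hDA.symm, usum_union hDB.symm, not_exists, not_and,
      not_lt]
  have hempty := hadjacent ∅ (Finset.disjoint_empty_left _)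
  simp only [Finset.union_empty] at hempty
  rw [Flippable, Critical, cpLT_uord_iff hu, hempty, forall₂_congr hadjacent]
  exact ⟨fun ⟨⟨hAB, hlt, _⟩, h⟩ => ⟨hAB, hlt, h⟩,
    fun ⟨hAB, hlt, h⟩ => ⟨⟨hAB, hlt, h ∅ (Finset.disjoint_empty_left _)⟩, h⟩⟩

theorem flippable_of_usum_eq_add_one (hu : Function.Injective (usum u)) (hAB : Disjoint A B)
    (h : usum u B = usum u A + 1) : Flippable (uord u) A B :=
  (flippable_uord_iff hu).2 ⟨hAB, by lia, fun _ _ _ hC => by lia⟩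

end Order

section Binary

variable {n : ℕ}

theorem usum_binaryUtility (A : Finset (Fin n)) :
    usum (binaryUtility n) A = 2 * ∑ i ∈ A.map Fin.valEmbedding, 2 ^ i := by
  simp only [usum, binaryUtility, Finset.sum_map, Fin.valEmbedding_apply, Finset.mul_sum,
    pow_succ']

theorem even_binaryUtility (i : Fin n) : Even (binaryUtility n i) :=
  even_two.pow_of_ne_zero (Nat.succ_ne_zero _)

theorem usum_binaryUtility_injective : Function.Injective (usum (binaryUtility n)) := by
  intro A B h
  rw [usum_binaryUtility, usum_binaryUtility] at h
  exact Finset.map_injective _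
    (Finset.geomSum_injective le_rfl (Nat.eq_of_mul_eq_mul_left two_pos h))

theorem usum_binaryUtility_lt (A : Finset (Fin n)) : usum (binaryUtility n) A < 2 ^ (n + 1) := by
  have hlt : ∑ i ∈ A.map Fin.valEmbedding, 2 ^ i < 2 ^ n :=
    Nat.geomSum_lt le_rfl (by simp)
  rw [usum_binaryUtility, pow_succ']
  lia

theorem exists_usum_binaryUtility_eq {s : ℕ} (hs : Even s) (hlt : s < 2 ^ (n + 1)) :
    ∃ A, usum (binaryUtility n) A = s := by
  obtain ⟨t, rfl⟩ := hs.two_dvd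
  have ht : t < 2 ^ n := by rw [pow_succ'] at hlt; lia
  have hsum : ∑ i ∈ t.bitIndices.toFinset, 2 ^ i = t := sum_toFinset_bitIndices_two_pow t
  have hbits : ∀ i ∈ t.bitIndices.toFinset, i < n := by
    intro i hi
    refine (Nat.pow_lt_pow_iff_right one_lt_two).1 (lt_of_le_of_lt ?_ ht)
    calc 2 ^ i ≤ ∑ i ∈ t.bitIndices.toFinset, 2 ^ i :=
          Finset.single_le_sum (fun _ _ => Nat.zero_le _) hi
      _ = t := hsum
  refine ⟨t.bitIndices.toFinset.attachFin hbits, ?_⟩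
  rw [usum_binaryUtility, Finset.map_valEmbedding_attachFin, hsum]

end Binary

section InsertNth

variable {n q d : ℕ} {w : Fin n → ℕ} (p : Fin (n + 1))

theorem exists_map_succAboveEmb_eq {C : Finset (Fin (n + 1))} (hC : p ∉ C) :
    ∃ A : Finset (Fin n), A.map p.succAboveEmb = C := by
  refine ⟨C.preimage p.succAbove p.succAbove_right_injective.injOn, ?_⟩
  ext i
  rcases p.eq_self_or_eq_succAbove i with rfl | ⟨j, rfl⟩ <;> simp [hC, Fin.succAbove_ne]

theorem exists_map_or_insert_map_succAboveEmb_eq (C : Finset (Fin (n + 1))) :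
    ∃ A : Finset (Fin n), A.map p.succAboveEmb = C ∨ insert p (A.map p.succAboveEmb) = C := by
  obtain ⟨A, hA⟩ := exists_map_succAboveEmb_eq p (Finset.notMem_erase p C)
  refine ⟨A, (em (p ∈ C)).symm.imp (fun hC => ?_) (fun hC => ?_)⟩
  · rw [hA, Finset.erase_eq_of_notMem hC]
  · rw [hA, Finset.insert_erase hC]

theorem notMem_map_succAboveEmb (A : Finset (Fin n)) : p ∉ A.map p.succAboveEmb := by
  simp [Fin.succAbove_ne]

theorem insert_map_succAboveEmb_injective :
    Function.Injective fun A : Finset (Fin n) => insert p (A.map p.succAboveEmb) := by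
  intro A B h
  refine Finset.map_injective p.succAboveEmb ?_
  simpa [Finset.erase_insert (notMem_map_succAboveEmb p _)] using congrArg (Finset.erase · p) h

theorem usum_insertNth_map (A : Finset (Fin n)) :
    usum (p.insertNth q w) (A.map p.succAboveEmb) = usum w A := by
  simp [usum]

theorem usum_insertNth_insert_map (A : Finset (Fin n)) :
    usum (p.insertNth q w) (insert p (A.map p.succAboveEmb)) = q + usum w A := by
  simp [usum, Finset.sum_insert (notMem_map_succAboveEmb p A)]

theorem even_usum (hw : ∀ i, Even (w i)) (A : Finset (Fin n)) : Even (usum w A) :=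
  Finset.even_sum w fun i _ => hw i

theorem odd_usum_insertNth_iff (hw : ∀ i, Even (w i)) (hq : Odd q) (C : Finset (Fin (n + 1))) :
    Odd (usum (p.insertNth q w) C) ↔ p ∈ C := by
  obtain ⟨A, rfl | rfl⟩ := exists_map_or_insert_map_succAboveEmb_eq p C
  · simp [usum_insertNth_map, even_usum hw, Fin.succAbove_ne]
  · simp [usum_insertNth_insert_map, hq.add_even (even_usum hw A)]

theorem usum_insertNth_injective (hw : ∀ i, Even (w i)) (hinj : Function.Injective (usum w))
    (hq : Odd q) : Function.Injective (usum (p.insertNth q w)) := by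
  intro A B h
  have hmem : p ∈ A ↔ p ∈ B := by
    rw [← odd_usum_insertNth_iff p hw hq, h, odd_usum_insertNth_iff p hw hq]
  obtain ⟨X, rfl | rfl⟩ := exists_map_or_insert_map_succAboveEmb_eq p A <;>
    obtain ⟨Y, rfl | rfl⟩ := exists_map_or_insert_map_succAboveEmb_eq p B
  · rw [usum_insertNth_map, usum_insertNth_map] at h
    rw [hinj h]
  · exact absurd (hmem.2 (Finset.mem_insert_self _ _)) (notMem_map_succAboveEmb p X)
  · exact absurd (hmem.1 (Finset.mem_insert_self _ _)) (notMem_map_succAboveEmb p Y)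
  · rw [usum_insertNth_insert_map, usum_insertNth_insert_map] at h
    rw [hinj (Nat.add_left_cancel h)]

theorem insert_map_mem_gapPairs_insertNth_iff {X Y : Finset (Fin n)} :
    (insert p (X.map p.succAboveEmb), Y.map p.succAboveEmb) ∈ gapPairs (p.insertNth q w) d ↔
      (X, Y) ∈ gapPairs w (q + d) := by
  simp only [gapPairs, Set.mem_ofPred_eq, Finset.disjoint_insert_left, Finset.disjoint_map,
    notMem_map_succAboveEmb, not_false_eq_true, true_and, usum_insertNth_map,
    usum_insertNth_insert_map]
  exact and_congr_right' (by lia)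

theorem map_insert_mem_gapPairs_insertNth_iff (hd : d ≤ q) {X Y : Finset (Fin n)} :
    (Y.map p.succAboveEmb, insert p (X.map p.succAboveEmb)) ∈ gapPairs (p.insertNth q w) d ↔
      (X, Y) ∈ gapPairs w (q - d) := by
  simp only [gapPairs, Set.mem_ofPred_eq, Finset.disjoint_insert_right, Finset.disjoint_map,
    notMem_map_succAboveEmb, not_false_eq_true, true_and, usum_insertNth_map,
    usum_insertNth_insert_map, disjoint_comm (a := Y)]
  exact and_congr_right' (by lia)

theorem ncard_gapPairs_insertNth_mem_fst :
    (gapPairs (p.insertNth q w) d ∩ {P | p ∈ P.1}).ncard = (gapPairs w (q + d)).ncard := by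
  have hinj : Function.Injective (fun P : Finset (Fin n) × Finset (Fin n) =>
      (insert p (P.1.map p.succAboveEmb), P.2.map p.succAboveEmb)) :=
    (insert_map_succAboveEmb_injective p).prodMap (Finset.map_injective p.succAboveEmb)
  rw [← Set.ncard_image_of_injective _ hinj]
  congr 1
  ext ⟨A, B⟩
  constructor
  · rintro ⟨hAB, hA : p ∈ A⟩
    obtain ⟨X, hX⟩ := exists_map_succAboveEmb_eq p (Finset.notMem_erase p A)
    obtain ⟨Y, rfl⟩ := exists_map_succAboveEmb_eq p (Finset.disjoint_left.1 hAB.1 hA)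
    obtain rfl : insert p (X.map p.succAboveEmb) = A := by rw [hX, Finset.insert_erase hA]
    exact ⟨(X, Y), (insert_map_mem_gapPairs_insertNth_iff p).1 hAB, rfl⟩
  · rintro ⟨⟨X, Y⟩, hXY, ⟨⟩⟩
    exact ⟨(insert_map_mem_gapPairs_insertNth_iff p).2 hXY, Finset.mem_insert_self p _⟩

theorem ncard_gapPairs_insertNth_mem_snd (hd : d ≤ q) :
    (gapPairs (p.insertNth q w) d ∩ {P | p ∈ P.2}).ncard = (gapPairs w (q - d)).ncard := by
  have hinj : Function.Injective (fun P : Finset (Fin n) × Finset (Fin n) =>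
      (P.2.map p.succAboveEmb, insert p (P.1.map p.succAboveEmb))) :=
    Prod.swap_injective.comp
      ((insert_map_succAboveEmb_injective p).prodMap (Finset.map_injective p.succAboveEmb))
  rw [← Set.ncard_image_of_injective _ hinj]
  congr 1
  ext ⟨A, B⟩
  constructor
  · rintro ⟨hAB, hB : p ∈ B⟩
    obtain ⟨X, hX⟩ := exists_map_succAboveEmb_eq p (Finset.notMem_erase p B)
    obtain ⟨Y, rfl⟩ := exists_map_succAboveEmb_eq p (Finset.disjoint_right.1 hAB.1 hB)
    obtain rfl : insert p (X.map p.succAboveEmb) = B := by rw [hX, Finset.insert_erase hB]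
    exact ⟨(X, Y), (map_insert_mem_gapPairs_insertNth_iff p hd).1 hAB, rfl⟩
  · rintro ⟨⟨X, Y⟩, hXY, ⟨⟩⟩
    exact ⟨(map_insert_mem_gapPairs_insertNth_iff p hd).2 hXY, Finset.mem_insert_self p _⟩

theorem mem_snd_iff_notMem_fst_of_mem_gapPairs_insertNth (hw : ∀ i, Even (w i)) (hq : Odd q)
    (hd : Odd d) {P : Finset (Fin (n + 1)) × Finset (Fin (n + 1))}
    (hP : P ∈ gapPairs (p.insertNth q w) d) : p ∈ P.2 ↔ p ∉ P.1 := by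
  rw [← odd_usum_insertNth_iff p hw hq, ← odd_usum_insertNth_iff p hw hq, hP.2, Nat.odd_add,
    ← Nat.not_odd_iff_even]
  tauto

theorem ncard_gapPairs_insertNth (hw : ∀ i, Even (w i)) (hq : Odd q) (hd : Odd d) (hdq : d ≤ q) :
    (gapPairs (p.insertNth q w) d).ncard =
      (gapPairs w (q + d)).ncard + (gapPairs w (q - d)).ncard := by
  have hsnd : gapPairs (p.insertNth q w) d \ {P | p ∈ P.1} =
      gapPairs (p.insertNth q w) d ∩ {P | p ∈ P.2} := by
    ext P
    exact and_congr_right fun hP =>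
      (mem_snd_iff_notMem_fst_of_mem_gapPairs_insertNth p hw hq hd hP).symm
  rw [← Set.ncard_inter_add_ncard_sdiff_eq_ncard _ {P | p ∈ P.1}, hsnd,
    ncard_gapPairs_insertNth_mem_fst, ncard_gapPairs_insertNth_mem_snd p hdq]

end InsertNth

section BinaryInsertNth

variable {n q : ℕ} (p : Fin (n + 1)) {A B C : Finset (Fin (n + 1))}

theorem usum_binaryInsertNth_injective (hq : Odd q) :
    Function.Injective (usum (binaryInsertNth p q)) :=
  usum_insertNth_injective p even_binaryUtility usum_binaryUtility_injective hq

theorem odd_usum_binaryInsertNth_iff (hq : Odd q) : Odd (usum (binaryInsertNth p q) C) ↔ p ∈ C :=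
  odd_usum_insertNth_iff p even_binaryUtility hq C

theorem usum_binaryInsertNth_singleton : usum (binaryInsertNth p q) {p} = q := by
  simp [usum, binaryInsertNth]

theorem le_usum_binaryInsertNth_of_mem (hC : p ∈ C) : q ≤ usum (binaryInsertNth p q) C := by
  calc q = usum (binaryInsertNth p q) {p} := (usum_binaryInsertNth_singleton p).symm
    _ ≤ usum (binaryInsertNth p q) C :=
      Finset.sum_le_sum_of_subset (Finset.singleton_subset_iff.2 hC)

theorem usum_binaryInsertNth_lt_of_notMem (hC : p ∉ C) :
    usum (binaryInsertNth p q) C < 2 ^ (n + 1) := by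
  obtain ⟨X, rfl⟩ := exists_map_succAboveEmb_eq p hC
  rw [binaryInsertNth, usum_insertNth_map]
  exact usum_binaryUtility_lt X

theorem exists_usum_binaryInsertNth_eq_of_even {s : ℕ} (hs : Even s) (hlt : s < 2 ^ (n + 1)) :
    ∃ C, usum (binaryInsertNth p q) C = s := by
  obtain ⟨X, hX⟩ := exists_usum_binaryUtility_eq hs hlt
  exact ⟨X.map p.succAboveEmb, by rw [binaryInsertNth, usum_insertNth_map, hX]⟩

theorem exists_usum_binaryInsertNth_eq {s : ℕ} (hq : Odd q) (hqs : q ≤ s + 1)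
    (hlt : s < 2 ^ (n + 1)) : ∃ C, usum (binaryInsertNth p q) C = s := by
  rcases Nat.even_or_odd s with hs | hs
  · exact exists_usum_binaryInsertNth_eq_of_even p hs hlt
  · have hqs' : q ≤ s := by grind
    obtain ⟨X, hX⟩ := exists_usum_binaryUtility_eq (n := n) (hs.tsub_odd hq) (by lia)
    exact ⟨insert p (X.map p.succAboveEmb), by
      rw [binaryInsertNth, usum_insertNth_insert_map, hX, Nat.add_sub_cancel' hqs']⟩

theorem notMem_and_usum_add_two_lt_of_adjacent (hq : Odd q) (hAB : Disjoint A B)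
    (hadj : ∀ C, usum (binaryInsertNth p q) A < usum (binaryInsertNth p q) C →
      usum (binaryInsertNth p q) B ≤ usum (binaryInsertNth p q) C)
    (hlt : usum (binaryInsertNth p q) A + 1 < usum (binaryInsertNth p q) B) :
    p ∉ A ∧ usum (binaryInsertNth p q) A + 2 < q := by
  have hrange : usum (binaryInsertNth p q) A + 2 < q ∨
      2 ^ (n + 1) ≤ usum (binaryInsertNth p q) A + 1 := by
    by_contra! hmem
    obtain ⟨C, hC⟩ := exists_usum_binaryInsertNth_eq p hq hmem.1 hmem.2
    have := hadj C (by lia)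
    lia
  have hA : p ∉ A := by
    intro hA
    have hqA := le_usum_binaryInsertNth_of_mem p (q := q) hA
    have hB := usum_binaryInsertNth_lt_of_notMem p (q := q) (Finset.disjoint_left.1 hAB hA)
    lia
  refine ⟨hA, hrange.resolve_right fun hge => ?_⟩
  have heven : ¬ Odd (usum (binaryInsertNth p q) A) := by
    rwa [odd_usum_binaryInsertNth_iff p hq]
  have hbound := usum_binaryInsertNth_lt_of_notMem p (q := q) hA
  rw [pow_succ'] at hge hbound
  grind

theorem usum_eq_add_one_of_flippable (hq : Odd q) (hqn : q < 2 ^ n)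
    (h : Flippable (uord (binaryInsertNth p q)) A B) :
    usum (binaryInsertNth p q) B = usum (binaryInsertNth p q) A + 1 := by
  obtain ⟨hAB, hlt, hgap⟩ := (flippable_uord_iff (usum_binaryInsertNth_injective p hq)).1 h
  have hadj : ∀ C, usum (binaryInsertNth p q) A < usum (binaryInsertNth p q) C →
      usum (binaryInsertNth p q) B ≤ usum (binaryInsertNth p q) C := by
    simpa [usum] using hgap ∅ (Finset.disjoint_empty_left _)
  by_contra hne
  obtain ⟨hA, hlow⟩ := notMem_and_usum_add_two_lt_of_adjacent p hq hAB hadj (by lia)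
  have hpow : 2 ^ (n + 1) = 2 * 2 ^ n := pow_succ' 2 n
  have hoddA := odd_usum_binaryInsertNth_iff p hq (C := A)
  have hoddB := odd_usum_binaryInsertNth_iff p hq (C := B)
  by_cases hB : p ∈ B
  · obtain ⟨C, hC⟩ := exists_usum_binaryInsertNth_eq_of_even p (q := q)
      (s := usum (binaryInsertNth p q) A + 2) (by grind) (by lia)
    have := hadj C (by lia)
    grind
  -- Adjoining `p` to both sets moves the gap to where every value is attained.
  · obtain ⟨C, hC⟩ := exists_usum_binaryInsertNth_eq p
      (s := usum (binaryInsertNth p q) A + q + 1) hq (by lia) (by lia)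
    have := hgap {p} (by simp [hA, hB]) C
    rw [usum_binaryInsertNth_singleton] at this
    lia

theorem flippable_binaryInsertNth_iff (hq : Odd q) (hqn : q < 2 ^ n) :
    Flippable (uord (binaryInsertNth p q)) A B ↔ (A, B) ∈ gapPairs (binaryInsertNth p q) 1 :=
  ⟨fun h => ⟨h.1.1, usum_eq_add_one_of_flippable p hq hqn h⟩, fun h =>
    flippable_of_usum_eq_add_one (usum_binaryInsertNth_injective p hq) h.1 h.2⟩

end BinaryInsertNth

theorem three_mul_qn (n : ℕ) : (3 * qn n : ℤ) = 2 ^ n - (-1) ^ n := by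
  have hdvd : (3 : ℤ) ∣ 2 ^ n - (-1) ^ n := sub_dvd_pow_sub_pow 2 (-1) n
  have hpos : 0 < 2 ^ n := Nat.two_pow_pos n
  rcases n.even_or_odd with hn | hn
  · rw [hn.neg_one_pow] at hdvd ⊢
    rw [qn, if_neg (by grind)]
    zify at *
    lia
  · rw [hn.neg_one_pow] at hdvd ⊢
    rw [qn, if_pos (by grind)]
    zify at *
    lia

theorem odd_qn {n : ℕ} (hn : n ≠ 0) : Odd (qn n) := by
  have htwo : Even ((2 : ℤ) ^ n) := even_two.pow_of_ne_zero hn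
  have hodd : Odd (3 * qn n : ℤ) := by
    rw [three_mul_qn]
    exact htwo.sub_odd odd_neg_one.pow
  exact_mod_cast (Int.odd_mul.1 hodd).2

theorem qn_lt_two_pow (n : ℕ) : qn n < 2 ^ n := by
  have hpos : 0 < 2 ^ n := Nat.two_pow_pos n
  rw [qn]
  split_ifs <;> lia

theorem mvec_eq_binaryInsertNth {n : ℕ} (hn : 2 ≤ n) :
    mvec n = binaryInsertNth ⟨n - 2, by lia⟩ (qn n) := by
  rw [binaryInsertNth, Fin.eq_insertNth_iff]
  constructor
  · rw [mvec, if_neg (by simp), if_pos (by simp; lia)]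
  · ext i
    rcases lt_or_ge (i : ℕ) (n - 2) with hi | hi
    · rw [Fin.removeNth_apply, Fin.succAbove_of_castSucc_lt _ _ hi]
      have hi' : (i : ℕ) + 1 ≤ n - 2 := hi
      rw [mvec, Fin.val_castSucc, if_pos hi', binaryUtility]
    · rw [Fin.removeNth_apply, Fin.succAbove_of_le_castSucc _ _ hi, mvec, Fin.val_succ,
        if_neg (by lia), if_neg (by lia), binaryUtility]
      split_ifs <;> congr 1 <;> lia

theorem stmt9_general {n q : ℕ} (p : Fin (n + 1)) (hq : Odd q) (hqn : q < 2 ^ n) :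
    (FlippablePairs (uord (binaryInsertNth p q))).ncard =
      (diffPairs n (q + 1)).ncard + (diffPairs n (q - 1)).ncard := by
  have hflip : FlippablePairs (uord (binaryInsertNth p q)) = gapPairs (binaryInsertNth p q) 1 :=
    Set.ext fun _ => flippable_binaryInsertNth_iff p hq hqn
  rw [hflip]
  exact ncard_gapPairs_insertNth p even_binaryUtility hq odd_one hq.pos

/-- The number of flippable pairs of `≼_{mvec n}` equals `g_n + h_n`. -/
theorem stmt9 {n : ℕ} (hn : 3 ≤ n) :
    (FlippablePairs (uord (mvec n))).ncard = gfun n + hfun n := by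
  rw [mvec_eq_binaryInsertNth (by lia)]
  exact stmt9_general _ (odd_qn (by lia)) (qn_lt_two_pow n)
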